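/- Let A ∈ ℝ^{n×n}, B ∈ ℝ^{n×m} with (A, B) controllable, Ă ∈ ℝ^{N×N}, B̆ ∈ ℝ^{N×M} with (Ă, B̆) controllable, and let ℓ exceed both (1/2)mn² + (1/2)mn + m + 1 and (1/2)MN² + (1/2)MN + M + 1. Let μ_0 ∈ ℝ^n, X_0 ∈ ℝ^N be fixed. Let (ν_0, …, ν_{ℓ-1}, U_0, …, U_{ℓ-1}) be random vectors whose joint law on ℝ^{(m+M)ℓ} is absolutely continuous with respect to Lebesgue measure, and suppose the sequence η_0, …, η_{ℓ-1} ∈ ℝ^N is a measurable function of (ν_0, …, ν_{ℓ-1}) alone. Define μ_{t+1} = A μ_t + B ν_t, X_{t+1} = Ă X_t + B̆ U_t + η_t, Z = [[μ_{ℓ-1}, …, μ_0]; [ν_{ℓ-1}, …, ν_0]], and D = [[X_{ℓ-1}, …, X_0]; [U_{ℓ-1}, …, U_0]]. Then with probability one both Z Z^T and D D^T are invertible. -/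

import Mathlib

open Matrix MeasureTheory

/-- The first-moment trajectory `μ_{t+1} = A μ_t + B ν_t` started at `μ₀`. -/
noncomputable def traj {n m : ℕ} (A : Matrix (Fin n) (Fin n) ℝ) (B : Matrix (Fin n) (Fin m) ℝ)
    (μ0 : Fin n → ℝ) (ν : ℕ → Fin m → ℝ) : ℕ → Fin n → ℝ
  | 0 => μ0
  | t + 1 => A *ᵥ traj A B μ0 ν t + B *ᵥ ν t

/-- The second-moment trajectory `X_{t+1} = Ă X_t + B̆ U_t + η_t` started at `X₀`. -/
noncomputable def trajEta {N M : ℕ} (Ab : Matrix (Fin N) (Fin N) ℝ)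
    (Bb : Matrix (Fin N) (Fin M) ℝ) (X0 : Fin N → ℝ) (U : ℕ → Fin M → ℝ)
    (η : ℕ → Fin N → ℝ) : ℕ → Fin N → ℝ
  | 0 => X0
  | t + 1 => Ab *ᵥ trajEta Ab Bb X0 U η t + Bb *ᵥ U t + η t

/-- The controllability matrix `[B, AB, …, A^{n-1} B] ∈ ℝ^{n × nm}`. -/
noncomputable def ctrbMat {n m : ℕ} (A : Matrix (Fin n) (Fin n) ℝ)
    (B : Matrix (Fin n) (Fin m) ℝ) : Matrix (Fin n) (Fin n × Fin m) ℝ :=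
  Matrix.of fun i kj => (A ^ (kj.1 : ℕ) * B) i kj.2

/-- `(A, B)` is controllable if the controllability matrix has rank `n`. -/
def Controllable {n m : ℕ} (A : Matrix (Fin n) (Fin n) ℝ)
    (B : Matrix (Fin n) (Fin m) ℝ) : Prop :=
  (ctrbMat A B).rank = n

/-- `Z = [[μ_{ℓ-1}, …, μ_0]; [ν_{ℓ-1}, …, ν_0]] ∈ ℝ^{(n+m) × ℓ}`. -/
noncomputable def Zmat {n m ℓ : ℕ} (A : Matrix (Fin n) (Fin n) ℝ)
    (B : Matrix (Fin n) (Fin m) ℝ) (μ0 : Fin n → ℝ) (ν : Fin ℓ → Fin m → ℝ) :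
    Matrix (Fin n ⊕ Fin m) (Fin ℓ) ℝ :=
  Matrix.of fun r c =>
    Sum.elim
      (fun i => traj A B μ0 (fun t => if h : t < ℓ then ν ⟨t, h⟩ else 0) c.rev i)
      (fun j => ν c.rev j) r

/-- `D = [[X_{ℓ-1}, …, X_0]; [U_{ℓ-1}, …, U_0]] ∈ ℝ^{(N+M) × ℓ}`. -/
noncomputable def Dmat {N M ℓ : ℕ} (Ab : Matrix (Fin N) (Fin N) ℝ)
    (Bb : Matrix (Fin N) (Fin M) ℝ) (X0 : Fin N → ℝ) (η : Fin ℓ → Fin N → ℝ)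
    (U : Fin ℓ → Fin M → ℝ) : Matrix (Fin N ⊕ Fin M) (Fin ℓ) ℝ :=
  Matrix.of fun r c =>
    Sum.elim
      (fun i => trajEta Ab Bb X0 (fun t => if h : t < ℓ then U ⟨t, h⟩ else 0)
        (fun t => if h : t < ℓ then η ⟨t, h⟩ else 0) c.rev i)
      (fun j => U c.rev j) r

/-!
A controllable system can be steered so that the vectors `(x_t, u_t)`, `t < n + m`, are linearly
independent: as long as those seen so far do not span, some choice of the next input leaves their
span. This yields an input sequence `W` for which the data matrix `Z_W` of the homogeneous system
(zero initial state, no offset) has full row rank. Since `D` is affine in the inputs, moving them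
by `s W` replaces `D` by `D + s Z_W`, which has full row rank for all but finitely many `s`. By
Fubini, first along these lines and then over the offsets, the inputs for which `D Dᵀ` is singular
form a Lebesgue-null set; `Z` is the case of zero offset.
-/

section LinearAlgebra

variable {ι κ : Type*} [Fintype κ]

lemma isUnit_mul_transpose_self_of_surjective_mulVec [Fintype ι] [DecidableEq ι] {R : Type*}
    [Field R] [LinearOrder R] [IsStrictOrderedRing R] {M : Matrix ι κ R}
    (hM : Function.Surjective M.mulVec) :
    IsUnit (M * Mᵀ) := by
  have hrange : LinearMap.range (M * Mᵀ).mulVecLin = ⊤ := by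
    apply Submodule.eq_top_of_finrank_eq
    change (M * Mᵀ).rank = _
    rw [rank_self_mul_transpose, Matrix.rank, LinearMap.range_eq_top.2 hM, finrank_top]
  exact mulVec_surjective_iff_isUnit.1 (LinearMap.range_eq_top.1 hrange)

/- If `W * R = 1`, then `(C + s • W) * R = C * R + s • 1` is singular only when `-s` is an
eigenvalue of `C * R`. -/
lemma finite_setOf_not_surjective_mulVec_add_smul [Finite ι] {K : Type*} [Field K]
    (C : Matrix ι κ K) {W : Matrix ι κ K} (hW : Function.Surjective W.mulVec) :
    {s : K | ¬ Function.Surjective (C + s • W).mulVec}.Finite := by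
  classical
  have := Fintype.ofFinite ι
  obtain ⟨R, hR⟩ := mulVec_surjective_iff_exists_right_inverse.1 hW
  refine ((finite_spectrum (C * R)).preimage neg_injective.injOn).subset fun s hs ↦ ?_
  contrapose! hs
  have hunit : IsUnit ((C + s • W) * R) := by
    have h : IsUnit (-(algebraMap K (Matrix ι ι K) (-s) - C * R)) :=
      (spectrum.notMem_iff.1 hs).neg
    rwa [neg_sub, map_neg, sub_neg_eq_add, Algebra.algebraMap_eq_smul_one, ← hR,
      ← Matrix.smul_mul, ← Matrix.add_mul] at h
  refine not_not.2 (Function.Surjective.of_comp (g := R.mulVec) ?_)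
  convert mulVec_surjective_iff_isUnit.2 hunit
  ext1 v
  exact mulVec_mulVec v _ _

end LinearAlgebra

section Controllability

variable {n m : ℕ} {A : Matrix (Fin n) (Fin n) ℝ} {B : Matrix (Fin n) (Fin m) ℝ}

lemma Controllable.le_mul (h : Controllable A B) : n ≤ n * m := by
  simpa [show (ctrbMat A B).rank = n from h] using (ctrbMat A B).rank_le_card_width

lemma Controllable.two_mul_add_le (h : Controllable A B) :
    2 * (n + m) ≤ m * n ^ 2 + m * n + 2 * m := by
  have hle : n ≤ n * m := h.le_mul
  have hsq : n * m ≤ n ^ 2 * m := Nat.mul_le_mul_right m (Nat.le_self_pow two_ne_zero n)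
  linarith

lemma Controllable.eq_top_of_mulVec_mem (h : Controllable A B) {X : Submodule ℝ (Fin n → ℝ)}
    (hA : ∀ x ∈ X, A *ᵥ x ∈ X) (hB : ∀ v, B *ᵥ v ∈ X) : X = ⊤ := by
  have hpow (k : ℕ) (v : Fin m → ℝ) : (A ^ k * B) *ᵥ v ∈ X := by
    induction k with
    | zero => simpa using hB v
    | succ k ih => simpa only [pow_succ', Matrix.mul_assoc, mulVec_mulVec] using hA _ ih
  have hcols : Submodule.span ℝ (Set.range (ctrbMat A B).col) = ⊤ := by
    apply Submodule.eq_top_of_finrank_eq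
    rw [← rank_eq_finrank_span_cols, Module.finrank_fin_fun]
    exact h
  rw [eq_top_iff, ← hcols, Submodule.span_le]
  rintro _ ⟨⟨k, j⟩, rfl⟩
  have hmem := hpow k (Pi.single j 1)
  rwa [mulVec_single_one] at hmem

end Controllability

section Excitation

variable {n m : ℕ} (A : Matrix (Fin n) (Fin n) ℝ) (B : Matrix (Fin n) (Fin m) ℝ)
  (x₀ : Fin n → ℝ)

/-- The joint state-input vector `(x_t, u_t)` at time `t` of the system `x_{t+1} = A x_t + B u_t`
started at `x₀`. The columns of `Zmat` are these vectors, in reverse order of time. -/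
noncomputable def stateInput (u : ℕ → Fin m → ℝ) (t : ℕ) : Fin n ⊕ Fin m → ℝ :=
  Sum.elim (traj A B x₀ u t) (u t)

lemma traj_congr {u u' : ℕ → Fin m → ℝ} {t : ℕ} (h : ∀ s < t, u s = u' s) :
    traj A B x₀ u t = traj A B x₀ u' t := by
  induction t with
  | zero => rfl
  | succ t ih =>
    simp only [traj, ih fun s hs ↦ h s (hs.trans t.lt_succ_self), h t t.lt_succ_self]

lemma stateInput_congr {u u' : ℕ → Fin m → ℝ} {t : ℕ} (h : ∀ s ≤ t, u s = u' s) :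
    stateInput A B x₀ u t = stateInput A B x₀ u' t := by
  rw [stateInput, stateInput, traj_congr A B x₀ fun s hs ↦ h s hs.le, h t le_rfl]

variable {A B}

/- The span contains `0 × ℝ^m`, so it equals `X × ℝ^m` with `X ∋ x_0, …, x_T`. As `[A B]` maps
each `(x_t, u_t)` with `t < T` to `x_{t+1} ∈ X`, it maps `X × ℝ^m` into `X`. -/
lemma Controllable.span_stateInput_eq_top (h : Controllable A B) {u : ℕ → Fin m → ℝ} {T : ℕ}
    (hT : ∀ v, Sum.elim (traj A B x₀ u T) v ∈
      Submodule.span ℝ (stateInput A B x₀ u '' Set.Iio T)) :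
    Submodule.span ℝ (stateInput A B x₀ u '' Set.Iio T) = ⊤ := by
  set S := Submodule.span ℝ (stateInput A B x₀ u '' Set.Iio T)
  have input_mem (v : Fin m → ℝ) : Sum.elim (0 : Fin n → ℝ) v ∈ S := by
    simpa [← Sum.elim_sub_sub] using S.sub_mem (hT v) (hT 0)
  have mem_iff (x : Fin n → ℝ) (v : Fin m → ℝ) : Sum.elim x v ∈ S ↔ Sum.elim x 0 ∈ S := by
    rw [← S.add_mem_iff_left (input_mem v) (x := Sum.elim x 0), ← Sum.elim_add_add]
    simp only [add_zero, zero_add]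
  let X : Submodule ℝ (Fin n → ℝ) := S.comap
    ((LinearEquiv.sumArrowLequivProdArrow (Fin n) (Fin m) ℝ ℝ).symm.toLinearMap ∘ₗ
      LinearMap.inl ℝ _ _)
  have mem_X (x : Fin n → ℝ) : x ∈ X ↔ Sum.elim x 0 ∈ S := Iff.rfl
  have traj_mem {t : ℕ} (ht : t ≤ T) : traj A B x₀ u t ∈ X := by
    rcases ht.lt_or_eq with ht | rfl
    · exact (mem_iff _ (u t)).1 (Submodule.subset_span ⟨t, ht, rfl⟩)
    · exact hT 0
  have step_mem : S ≤ X.comap (fromCols A B).mulVecLin := by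
    refine Submodule.span_le.2 ?_
    rintro _ ⟨t, ht, rfl⟩
    simpa [stateInput, traj] using traj_mem (Nat.succ_le_of_lt ht)
  have hX : X = ⊤ := h.eq_top_of_mulVec_mem
    (fun x hx ↦ by simpa using step_mem ((mem_X x).1 hx))
    (fun v ↦ by simpa using step_mem (input_mem v))
  refine eq_top_iff.2 fun w _ ↦ ?_
  rw [← Sum.elim_comp_inl_inr w, mem_iff, ← mem_X, hX]
  exact Submodule.mem_top

lemma Controllable.exists_notMem_span_stateInput (h : Controllable A B) (u : ℕ → Fin m → ℝ)
    {T : ℕ} (hT : T < n + m) :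
    ∃ v, Sum.elim (traj A B x₀ u T) v ∉
      Submodule.span ℝ (stateInput A B x₀ u '' Set.Iio T) := by
  by_contra! hmem
  have hle : (Set.range fun t : Set.Iio T ↦ stateInput A B x₀ u t).finrank ℝ ≤ T := by
    simpa using finrank_range_le_card (R := ℝ) fun t : Set.Iio T ↦ stateInput A B x₀ u t
  rw [← Set.image_eq_range, Set.finrank, h.span_stateInput_eq_top x₀ hmem] at hle
  rw [finrank_top, Module.finrank_fintype_fun_eq_card, Fintype.card_sum, Fintype.card_fin,
    Fintype.card_fin] at hle
  omega

lemma Controllable.exists_linearIndepOn_stateInput (h : Controllable A B) {T : ℕ}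
    (hT : T ≤ n + m) :
    ∃ u, LinearIndepOn ℝ (stateInput A B x₀ u) (Set.Iio T) := by
  induction T with
  | zero => exact ⟨0, by simp⟩
  | succ T ih =>
    obtain ⟨u, hu⟩ := ih (Nat.le_of_succ_le hT)
    obtain ⟨v, hv⟩ := h.exists_notMem_span_stateInput x₀ u hT
    have past : Set.EqOn (stateInput A B x₀ u)
        (stateInput A B x₀ (Function.update u T v)) (Set.Iio T) := fun t ht ↦
      stateInput_congr A B x₀ fun s hs ↦
        (Function.update_of_ne (hs.trans_lt ht).ne v u).symm
    have present : stateInput A B x₀ (Function.update u T v) T =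
        Sum.elim (traj A B x₀ u T) v := by
      rw [stateInput, Function.update_self,
        traj_congr A B x₀ fun s hs ↦ Function.update_of_ne hs.ne v u]
    refine ⟨Function.update u T v, ?_⟩
    rw [← Order.succ_eq_add_one, Order.Iio_succ_eq_insert]
    refine (hu.congr past).insert ?_
    rwa [present, ← past.image_eq]

lemma Controllable.exists_surjective_mulVec_Zmat (h : Controllable A B) {ℓ : ℕ}
    (hℓ : n + m ≤ ℓ) :
    ∃ ν : Fin ℓ → Fin m → ℝ, Function.Surjective (Zmat A B x₀ ν).mulVec := by
  obtain ⟨u, hu⟩ := h.exists_linearIndepOn_stateInput x₀ le_rfl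
  have hcol (c : Fin ℓ) :
      (Zmat A B x₀ fun t ↦ u t).col c = stateInput A B x₀ u c.rev := by
    have hext : ∀ s < (c.rev : ℕ), u s = if _ : s < ℓ then u s else 0 := fun s hs ↦ by
      rw [dif_pos (hs.trans c.rev.isLt)]
    rw [stateInput, traj_congr A B x₀ hext]
    rfl
  refine ⟨fun t ↦ u t, ?_⟩
  have hspan : Submodule.span ℝ (stateInput A B x₀ u '' Set.Iio (n + m)) = ⊤ := by
    rw [Set.image_eq_range]
    exact hu.linearIndependent.span_eq_top_of_card_eq_finrank' (by simp)
  suffices (Zmat A B x₀ fun t : Fin ℓ ↦ u t).mulVecLin.range = ⊤ from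
    LinearMap.range_eq_top.1 this
  rw [range_mulVecLin, eq_top_iff, ← hspan]
  refine Submodule.span_mono ?_
  rintro _ ⟨t, ht, rfl⟩
  exact ⟨Fin.rev ⟨t, ht.trans_le hℓ⟩, by rw [hcol, Fin.rev_rev]⟩

end Excitation

section DataMatrices

variable {N M ℓ : ℕ} (A : Matrix (Fin N) (Fin N) ℝ) (B : Matrix (Fin N) (Fin M) ℝ)
  (X₀ : Fin N → ℝ)

lemma traj_eq_trajEta_zero (u : ℕ → Fin M → ℝ) (t : ℕ) :
    traj A B X₀ u t = trajEta A B X₀ u 0 t := by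
  induction t with
  | zero => rfl
  | succ t ih => simp only [traj, trajEta, ih, Pi.zero_apply, add_zero]

lemma Zmat_eq_Dmat_zero (ν : Fin ℓ → Fin M → ℝ) : Zmat A B X₀ ν = Dmat A B X₀ 0 ν := by
  ext (i | j) c
  · simp only [Zmat, Dmat, of_apply, Sum.elim_inl, traj_eq_trajEta_zero, Pi.zero_apply,
      dite_eq_ite, ite_self]
    rfl
  · rfl

lemma trajEta_add_smul (U W : ℕ → Fin M → ℝ) (η : ℕ → Fin N → ℝ) (s : ℝ) (t : ℕ) :
    trajEta A B X₀ (U + s • W) η t = trajEta A B X₀ U η t + s • traj A B 0 W t := by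
  induction t with
  | zero => simp [traj, trajEta]
  | succ t ih =>
    simp only [traj, trajEta, ih, mulVec_add, mulVec_smul, Pi.add_apply, Pi.smul_apply, smul_add]
    abel

lemma Dmat_add_smul (η : Fin ℓ → Fin N → ℝ) (U W : Fin ℓ → Fin M → ℝ) (s : ℝ) :
    Dmat A B X₀ η (U + s • W) = Dmat A B X₀ η U + s • Zmat A B 0 W := by
  have hext : (fun t ↦ if h : t < ℓ then (U + s • W) ⟨t, h⟩ else 0) =
      (fun t ↦ if h : t < ℓ then U ⟨t, h⟩ else 0) +
        s • (fun t ↦ if h : t < ℓ then W ⟨t, h⟩ else 0) := by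
    ext t j
    by_cases ht : t < ℓ <;> simp [ht]
  ext (i | j) c
  · simp only [Dmat, Zmat, of_apply, Sum.elim_inl, Matrix.add_apply, Matrix.smul_apply]
    rw [hext, trajEta_add_smul, Pi.add_apply, Pi.smul_apply]
  · rfl

lemma continuous_trajEta (t : ℕ) :
    Continuous fun p : (ℕ → Fin N → ℝ) × (ℕ → Fin M → ℝ) ↦ trajEta A B X₀ p.2 p.1 t := by
  induction t with
  | zero => exact continuous_const
  | succ t ih =>
    simp only [trajEta]
    fun_prop

lemma continuous_Dmat :
    Continuous fun p : (Fin ℓ → Fin N → ℝ) × (Fin ℓ → Fin M → ℝ) ↦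
      Dmat A B X₀ p.1 p.2 := by
  have hext {k : ℕ} :
      Continuous fun (w : Fin ℓ → Fin k → ℝ) t ↦ if h : t < ℓ then w ⟨t, h⟩ else 0 :=
    continuous_pi fun t ↦ by split_ifs <;> fun_prop
  refine continuous_matrix ?_
  rintro (i | j) c
  · exact (continuous_apply i).comp ((continuous_trajEta A B X₀ c.rev).comp
      ((hext.comp continuous_fst).prodMk (hext.comp continuous_snd)))
  · exact (continuous_apply_apply c.rev j).comp continuous_snd

lemma isOpen_setOf_isUnit_Dmat_mul_transpose :
    IsOpen {p : (Fin ℓ → Fin N → ℝ) × (Fin ℓ → Fin M → ℝ) |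
      IsUnit (Dmat A B X₀ p.1 p.2 * (Dmat A B X₀ p.1 p.2)ᵀ)} := by
  have hD := continuous_Dmat (ℓ := ℓ) A B X₀
  simp only [isUnit_iff_isUnit_det, isUnit_iff_ne_zero]
  exact isOpen_ne_fun (hD.matrix_mul hD.matrix_transpose).matrix_det continuous_const

end DataMatrices

section AlmostEverywhere

variable {N M ℓ : ℕ} {A : Matrix (Fin N) (Fin N) ℝ} {B : Matrix (Fin N) (Fin M) ℝ}

lemma Controllable.ae_isUnit_Dmat_mul_transpose (h : Controllable A B) (hℓ : N + M ≤ ℓ)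
    (X₀ : Fin N → ℝ) (η : Fin ℓ → Fin N → ℝ) :
    ∀ᵐ U : Fin ℓ → Fin M → ℝ, IsUnit (Dmat A B X₀ η U * (Dmat A B X₀ η U)ᵀ) := by
  obtain ⟨W, hW⟩ := h.exists_surjective_mulVec_Zmat 0 hℓ
  have hmeas : MeasurableSet {U | IsUnit (Dmat A B X₀ η U * (Dmat A B X₀ η U)ᵀ)} :=
    ((isOpen_setOf_isUnit_Dmat_mul_transpose A B X₀).preimage
      (Continuous.prodMk_right η)).measurableSet
  have : (volume : Measure (Fin ℓ → Fin M → ℝ)).IsAddHaarMeasure := Measure.pi.isAddHaarMeasure _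
  refine ae_mem_of_ae_add_linearMap_mem (LinearMap.toSpanSingleton ℝ _ W) volume volume hmeas
    fun U ↦ ?_
  have hfin := finite_setOf_not_surjective_mulVec_add_smul (Dmat A B X₀ η U) hW
  filter_upwards [hfin.countable.ae_notMem volume] with s hs
  change IsUnit (Dmat A B X₀ η (U + s • W) * (Dmat A B X₀ η (U + s • W))ᵀ)
  rw [Dmat_add_smul]
  exact isUnit_mul_transpose_self_of_surjective_mulVec (not_not.1 hs)

lemma Controllable.ae_prod_isUnit_Dmat_mul_transpose (h : Controllable A B) (hℓ : N + M ≤ ℓ)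
    (X₀ : Fin N → ℝ) {E : Type*} [MeasurableSpace E] (μ : Measure E)
    {η : E → Fin ℓ → Fin N → ℝ} (hη : Measurable η) :
    ∀ᵐ p ∂μ.prod (volume : Measure (Fin ℓ → Fin M → ℝ)),
      IsUnit (Dmat A B X₀ (η p.1) p.2 * (Dmat A B X₀ (η p.1) p.2)ᵀ) := by
  have hmeas : MeasurableSet {p : E × (Fin ℓ → Fin M → ℝ) |
      IsUnit (Dmat A B X₀ (η p.1) p.2 * (Dmat A B X₀ (η p.1) p.2)ᵀ)} :=
    (isOpen_setOf_isUnit_Dmat_mul_transpose A B X₀).measurableSet.preimage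
      ((hη.comp measurable_fst).prodMk measurable_snd)
  exact (Measure.ae_prod_mem_iff_ae_ae_mem hmeas).2
    (.of_forall fun x ↦ h.ae_isUnit_Dmat_mul_transpose hℓ X₀ (η x))

end AlmostEverywhere

theorem ZZt_and_DDt_invertible_as_general {Ω : Type*} [MeasurableSpace Ω] (P : Measure Ω)
    {n m N M ℓ : ℕ}
    (A : Matrix (Fin n) (Fin n) ℝ) (B : Matrix (Fin n) (Fin m) ℝ)
    (Ab : Matrix (Fin N) (Fin N) ℝ) (Bb : Matrix (Fin N) (Fin M) ℝ)
    (μ0 : Fin n → ℝ) (X0 : Fin N → ℝ)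
    (hctrb1 : Controllable A B) (hctrb2 : Controllable Ab Bb)
    (hℓ1 : n + m ≤ ℓ) (hℓ2 : N + M ≤ ℓ)
    (V : Ω → (Fin ℓ → Fin m → ℝ) × (Fin ℓ → Fin M → ℝ)) (hVmeas : AEMeasurable V P)
    (hac : P.map V ≪ volume)
    (ηf : (Fin ℓ → Fin m → ℝ) → Fin ℓ → Fin N → ℝ) (hηf : Measurable ηf) :
    ∀ᵐ ω ∂P, IsUnit (Zmat A B μ0 (V ω).1 * (Zmat A B μ0 (V ω).1)ᵀ) ∧
      IsUnit (Dmat Ab Bb X0 (ηf (V ω).1) (V ω).2 *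
        (Dmat Ab Bb X0 (ηf (V ω).1) (V ω).2)ᵀ) := by
  have hZ : ∀ᵐ p : (Fin ℓ → Fin m → ℝ) × (Fin ℓ → Fin M → ℝ),
      IsUnit (Zmat A B μ0 p.1 * (Zmat A B μ0 p.1)ᵀ) := by
    simp only [Zmat_eq_Dmat_zero]
    exact Measure.quasiMeasurePreserving_fst.ae (hctrb1.ae_isUnit_Dmat_mul_transpose hℓ1 μ0 0)
  have hD := hctrb2.ae_prod_isUnit_Dmat_mul_transpose hℓ2 X0 volume hηf
  exact ae_of_ae_map hVmeas (hac.ae_le (hZ.and hD))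

/-- If `(A, B)` and `(Ă, B̆)` are controllable, `ℓ` exceeds both
`(1/2)mn² + (1/2)mn + m + 1` and `(1/2)MN² + (1/2)MN + M + 1` (stated multiplied by `2`),
the joint law of the random inputs `(ν_0, …, ν_{ℓ-1}, U_0, …, U_{ℓ-1})` on `ℝ^{(m+M)ℓ}` is
absolutely continuous with respect to Lebesgue measure, and the offsets `η_0, …, η_{ℓ-1}` are
a measurable function of `(ν_0, …, ν_{ℓ-1})` alone, then with probability one both `Z Zᵀ`
and `D Dᵀ` are invertible. -/
theorem ZZt_and_DDt_invertible_as {Ω : Type*} [MeasureSpace Ω]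
    [IsProbabilityMeasure (volume : Measure Ω)] {n m N M ℓ : ℕ}
    (A : Matrix (Fin n) (Fin n) ℝ) (B : Matrix (Fin n) (Fin m) ℝ)
    (Ab : Matrix (Fin N) (Fin N) ℝ) (Bb : Matrix (Fin N) (Fin M) ℝ)
    (μ0 : Fin n → ℝ) (X0 : Fin N → ℝ)
    (hctrb1 : Controllable A B) (hctrb2 : Controllable Ab Bb)
    (hℓ1 : 2 * ℓ > m * n ^ 2 + m * n + 2 * m + 2)
    (hℓ2 : 2 * ℓ > M * N ^ 2 + M * N + 2 * M + 2)
    (V : Ω → (Fin ℓ → Fin m → ℝ) × (Fin ℓ → Fin M → ℝ)) (hVmeas : Measurable V)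
    (hac : Measure.map V volume ≪
      (volume : Measure ((Fin ℓ → Fin m → ℝ) × (Fin ℓ → Fin M → ℝ))))
    (ηf : (Fin ℓ → Fin m → ℝ) → Fin ℓ → Fin N → ℝ) (hηf : Measurable ηf) :
    ∀ᵐ ω, IsUnit (Zmat A B μ0 (V ω).1 * (Zmat A B μ0 (V ω).1)ᵀ) ∧
      IsUnit (Dmat Ab Bb X0 (ηf (V ω).1) (V ω).2 *
        (Dmat Ab Bb X0 (ηf (V ω).1) (V ω).2)ᵀ) := by
  have hnm : n + m ≤ ℓ := by linarith [hctrb1.two_mul_add_le]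
  have hNM : N + M ≤ ℓ := by linarith [hctrb2.two_mul_add_le]
  exact ZZt_and_DDt_invertible_as_general volume A B Ab Bb μ0 X0 hctrb1 hctrb2 hnm hNM V
    hVmeas.aemeasurable hac ηf hηf
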